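/- Let 3 < p < 5. Suppose v : (0,∞) → ℝ is a twice continuously differentiable solution of r²v''(r) + (2(p−3)/(p−1))·r·v'(r) − (2(p−3)/(p−1)²)·v(r) + |v(r)|^{p-1}·v(r) = 0 on (0,∞) such that v(r) → 0 as r → 0⁺ and as r → ∞, and such that liminf_{r→0⁺} r²·v'(r)² = 0 and liminf_{r→∞} r²·v'(r)² = 0. Then v is identically zero. Equivalently: if v is not identically zero, then at least one of liminf_{r→0⁺} r²·v'(r)² > 0 or liminf_{r→∞} r²·v'(r)² > 0 holds. -/

import Mathlib

/-! The energy `E(r) = r² v'² / 2 - ((p-3)/(p-1)²) v² + |v|^(p+1)/(p+1)` satisfies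
`E' = ((5-p)/(p-1)) r v'² ≥ 0`, so it is monotone. By the mean value theorem on `[R, 2R]` there is
`ξ ∈ (R, 2R)` with `|ξ v'(ξ)| ≤ 2 |v(2R) - v(R)|`; as `v → 0` at both ends of `(0,∞)`, this gives
`E(ξ) → 0` along points tending to `0⁺` and along points tending to `∞`. Monotonicity then forces
`E = 0`, hence `v' = 0`, and `v` is a constant with limit `0`. -/

open Set Filter

/-- The energy of `v`, as a function of `r` and of the pair `(v, v')`. -/
noncomputable def energy (p : ℝ) (v v' : ℝ → ℝ) (r : ℝ) : ℝ :=
  (r * v' r) ^ 2 / 2 - ((p - 3) / (p - 1) ^ 2) * v r ^ 2 + |v r| ^ (p + 1) / (p + 1)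

theorem hasDerivAt_energy {p : ℝ} (hp3 : 3 < p) {v v' v'' : ℝ → ℝ} {r : ℝ}
    (hv : HasDerivAt v (v' r) r) (hv' : HasDerivAt v' (v'' r) r)
    (hode : r ^ 2 * v'' r + (2 * (p - 3) / (p - 1)) * r * v' r
        - (2 * (p - 3) / (p - 1) ^ 2) * v r + |v r| ^ (p - 1) * v r = 0) :
    HasDerivAt (energy p v v') ((5 - p) / (p - 1) * r * v' r ^ 2) r := by
  have h1 := (((hasDerivAt_id r).mul hv').pow 2).div_const 2
  have h2 := (hv.pow 2).const_mul ((p - 3) / (p - 1) ^ 2)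
  have h3 := ((hasDerivAt_abs_rpow (v r) (p := p + 1) (by linarith)).comp r hv).div_const (p + 1)
  refine ((h1.sub h2).add h3).congr_deriv ?_
  have e : p + 1 - 2 = p - 1 := by ring
  have hp1 : p - 1 ≠ 0 := by linarith
  have hp2 : p + 1 ≠ 0 := by linarith
  have h4 : (p + 1) * |v r| ^ (p - 1) * v r * v' r / (p + 1) = |v r| ^ (p - 1) * v r * v' r := by
    field_simp
  have h5 : (5 - p) / (p - 1) = 1 - 2 * (p - 3) / (p - 1) := by
    field_simp
    ring
  rw [e, h4, h5]
  simp only [id, Pi.mul_apply]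
  push_cast
  linear_combination v' r * hode

/-- If `v → 0` along a filter on `(0,∞)` that is invariant under passing from `R` to points of
`(R, 2R]`, then the energy tends to `0` along suitable points `ξ R ∈ (R, 2R)`. -/
theorem exists_energy_tendsto {p : ℝ} (hp3 : 3 < p) {v v' : ℝ → ℝ} {l : Filter ℝ}
    (hv : ∀ r ∈ Ioi (0:ℝ), HasDerivAt v (v' r) r) (hl : ∀ᶠ R in l, 0 < R)
    (hinv : ∀ f : ℝ → ℝ, (∀ R, 0 < R → R < f R ∧ f R ≤ 2 * R) → Tendsto f l l)
    (hlim : Tendsto v l (nhds 0)) :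
    ∃ ξ : ℝ → ℝ, (∀ R, 0 < R → R < ξ R ∧ ξ R < 2 * R) ∧
      Tendsto (fun R => energy p v v' (ξ R)) l (nhds 0) := by
  have key : ∀ R : ℝ, 0 < R → ∃ x, (R < x ∧ x < 2 * R) ∧ v' x = (v (2 * R) - v R) / R := by
    intro R hR
    obtain ⟨x, hx, h⟩ := exists_hasDerivAt_eq_slope v v' (by linarith : R < 2 * R)
      (fun y hy => (hv y (lt_of_lt_of_le hR hy.1)).continuousAt.continuousWithinAt)
      (fun y hy => hv y (lt_trans hR hy.1))
    exact ⟨x, hx, by rw [h]; congr 1; ring⟩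
  choose! ξ hξ hd using key
  refine ⟨ξ, hξ, ?_⟩
  have hvξ : Tendsto (fun R => v (ξ R)) l (nhds 0) :=
    hlim.comp (hinv ξ fun R hR => ⟨(hξ R hR).1, (hξ R hR).2.le⟩)
  have hv2 : Tendsto (fun R => v (2 * R)) l (nhds 0) :=
    hlim.comp (hinv (fun R => 2 * R) fun R hR => ⟨by linarith, le_rfl⟩)
  have hb : Tendsto (fun R => 2 * |v (2 * R) - v R|) l (nhds 0) := by
    simpa using ((hv2.sub hlim).abs.const_mul 2)
  have hvd : Tendsto (fun R => ξ R * v' (ξ R)) l (nhds 0) := by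
    refine squeeze_zero_norm' ?_ hb
    filter_upwards [hl] with R hR
    rw [hd R hR, Real.norm_eq_abs, abs_mul, abs_div, abs_of_pos hR,
      abs_of_pos (hR.trans (hξ R hR).1), ← mul_div_assoc, div_le_iff₀ hR]
    nlinarith [abs_nonneg (v (2 * R) - v R), (hξ R hR).2]
  have hpow : Tendsto (fun R => |v (ξ R)| ^ (p + 1)) l (nhds 0) := by
    have h := hvξ.abs.rpow_const (p := p + 1) (Or.inr (by linarith))
    rwa [abs_zero, Real.zero_rpow (by linarith)] at h
  have h := (((hvd.pow 2).div_const 2).sub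
    ((hvξ.pow 2).const_mul ((p - 3) / (p - 1) ^ 2))).add (hpow.div_const (p + 1))
  simpa [energy] using h

/-- For `3 < p < 5`, a `C²` solution on `(0,∞)` of
`r² v'' + (2(p-3)/(p-1)) r v' - (2(p-3)/(p-1)²) v + |v|^{p-1} v = 0` with `v → 0`
at `0⁺` and at `∞`, and with `liminf r² v'(r)² = 0` both as `r → 0⁺` and as `r → ∞`,
must vanish identically. -/
theorem vanishing_liminf_implies_zero
    (p : ℝ) (hp3 : 3 < p) (hp5 : p < 5)
    (v v' v'' : ℝ → ℝ)
    (hv : ∀ r ∈ Ioi (0:ℝ), HasDerivAt v (v' r) r)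
    (hv' : ∀ r ∈ Ioi (0:ℝ), HasDerivAt v' (v'' r) r)
    (hv'' : ContinuousOn v'' (Ioi 0))
    (hode : ∀ r ∈ Ioi (0:ℝ),
      r ^ 2 * v'' r + (2 * (p - 3) / (p - 1)) * r * v' r
        - (2 * (p - 3) / (p - 1) ^ 2) * v r + |v r| ^ (p - 1) * v r = 0)
    (hzero : Tendsto v (nhdsWithin 0 (Ioi 0)) (nhds 0))
    (hinf : Tendsto v atTop (nhds 0))
    (hliminf0 : Filter.liminf (fun r => r ^ 2 * (v' r) ^ 2)
      (nhdsWithin 0 (Ioi 0)) = 0)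
    (hliminfInf : Filter.liminf (fun r => r ^ 2 * (v' r) ^ 2) atTop = 0) :
    ∀ r ∈ Ioi (0:ℝ), v r = 0 := by
  have hE : ∀ r ∈ Ioi (0:ℝ),
      HasDerivAt (energy p v v') ((5 - p) / (p - 1) * r * v' r ^ 2) r := fun r hr =>
    hasDerivAt_energy hp3 (hv r hr) (hv' r hr) (hode r hr)
  have hmono : MonotoneOn (energy p v v') (Ioi 0) := by
    refine monotoneOn_of_deriv_nonneg (convex_Ioi 0)
      (fun r hr => (hE r hr).continuousAt.continuousWithinAt)
      (fun r hr => ?_) (fun r hr => ?_)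
    · rw [interior_Ioi] at hr
      exact (hE r hr).differentiableAt.differentiableWithinAt
    · rw [interior_Ioi] at hr
      rw [(hE r hr).deriv]
      have : 0 < (5 - p) / (p - 1) := div_pos (by linarith) (by linarith)
      have hr' : 0 < r := hr
      positivity
  have hupper : ∀ r ∈ Ioi (0:ℝ), energy p v v' r ≤ 0 := by
    intro r hr
    obtain ⟨ξ, hξ, hlim⟩ := exists_energy_tendsto (l := atTop) hp3 hv (eventually_gt_atTop 0)
      (fun f hf => tendsto_atTop_mono' _
        ((eventually_gt_atTop 0).mono fun R hR => (hf R hR).1.le) tendsto_id) hinf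
    refine ge_of_tendsto hlim ?_
    filter_upwards [eventually_gt_atTop r] with R hR
    have h := (hξ R (lt_trans hr hR)).1
    exact hmono hr (lt_trans hr (hR.trans h)) (hR.trans h).le
  have hlower : ∀ r ∈ Ioi (0:ℝ), 0 ≤ energy p v v' r := by
    intro r hr
    have hpos : ∀ᶠ R in nhdsWithin (0:ℝ) (Ioi 0), 0 < R := self_mem_nhdsWithin
    obtain ⟨ξ, hξ, hlim⟩ := exists_energy_tendsto hp3 hv hpos
      (fun f hf => by
        have h0 : Tendsto (fun R : ℝ => R) (nhdsWithin (0:ℝ) (Ioi 0)) (nhds 0) :=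
          tendsto_id.mono_left nhdsWithin_le_nhds
        refine tendsto_nhdsWithin_iff.2 ⟨?_, hpos.mono fun R hR => lt_trans hR (hf R hR).1⟩
        exact tendsto_of_tendsto_of_tendsto_of_le_of_le' h0 (by simpa using h0.const_mul 2)
          (hpos.mono fun R hR => (hf R hR).1.le) (hpos.mono fun R hR => (hf R hR).2)) hzero
    refine le_of_tendsto hlim ?_
    have hr2 : (0:ℝ) < r / 2 := half_pos hr
    filter_upwards [Ioo_mem_nhdsGT hr2] with R hR
    obtain ⟨h1, h2⟩ := hξ R hR.1
    exact hmono (lt_trans hR.1 h1) hr (by linarith [hR.2])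
  have hd0 : ∀ r ∈ Ioi (0:ℝ), v' r = 0 := by
    intro r hr
    have hev : energy p v v' =ᶠ[nhds r] fun _ => 0 := by
      filter_upwards [Ioi_mem_nhds hr] with s hs
      exact le_antisymm (hupper s hs) (hlower s hs)
    have h := (hE r hr).unique ((hasDerivAt_const r (0:ℝ)).congr_of_eventuallyEq hev)
    have hr' : r ≠ 0 := ne_of_gt hr
    have h5 : 5 - p ≠ 0 := by linarith
    have h1 : p - 1 ≠ 0 := by linarith
    simpa [hr', h5, h1] using h
  intro r hr
  have hconst : ∀ s ∈ Ioi (0:ℝ), v s = v r := fun s hs =>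
    (convex_Ioi (0:ℝ)).is_const_of_fderivWithin_eq_zero (𝕜 := ℝ)
      (fun x hx => (hv x hx).differentiableAt.differentiableWithinAt)
      (fun x hx => by
        have h := (hv x hx).hasFDerivAt.hasFDerivWithinAt (s := Ioi (0:ℝ))
        rw [h.fderivWithin (isOpen_Ioi.uniqueDiffWithinAt hx), hd0 x hx]
        ext
        simp) hs hr
  refine tendsto_nhds_unique ?_ hinf
  refine tendsto_const_nhds.congr' ?_
  filter_upwards [eventually_gt_atTop 0] with s hs
  exact (hconst s hs).symm
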